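/- Let b ∈ 𝒮((ℤⁿ)^p) with p ∈ ℕ, let P_j ∈ ℝ[X₁,…,Xₙ] be a homogeneous polynomial of degree j, let r ∈ ℕ₀, and let φ be a real-valued function on ℤⁿ × (ℤⁿ)^p. Define h(s,k,l) := b(l) P_j(k) e^{iφ(k,l)} / (|k|^{s+r} |k+l̂₁|² ⋯ |k+l̂_p|²), with the convention h(s,k,l) := 0 if k = 0 or one of the denominators vanishes. Then for every s ∈ ℂ with Re(s) > n + j − r − 2p, the family (h(s,k,l))_{(k,l)∈ℤⁿ×(ℤⁿ)^p} is absolutely summable; in particular Σ'_{k∈ℤⁿ} Σ_{l∈(ℤⁿ)^p} h(s,k,l) = Σ_{l∈(ℤⁿ)^p} Σ'_{k∈ℤⁿ} h(s,k,l). -/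

import Mathlib

noncomputable section

/-- Euclidean norm of an integer vector `k ∈ ℤⁿ`. -/
def znorm {n : ℕ} (k : Fin n → ℤ) : ℝ := Real.sqrt (∑ i, ((k i : ℝ)) ^ 2)

/-- Schwartz (rapidly decreasing) sequences on `(ℤⁿ)^p`. -/
def IsSchwartzSeq {p n : ℕ} (b : (Fin p → Fin n → ℤ) → ℂ) : Prop :=
  ∀ r : ℕ, ∃ C : ℝ, ∀ l : Fin p → Fin n → ℤ,
    (1 + ∑ i, ∑ a, ((l i a : ℝ)) ^ 2) ^ r * ‖b l‖ ^ 2 ≤ C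

/-- Partial sums `l̂ᵢ = l₁ + ⋯ + lᵢ` of a tuple `l ∈ (ℤⁿ)^p`. -/
def lhat {p n : ℕ} (l : Fin p → Fin n → ℤ) (i : Fin p) : Fin n → ℤ :=
  ∑ j ∈ Finset.Iic i, l j

/-- The term `h(s,k,l) = b(l) P_j(k) e^{iφ(k,l)} / (|k|^{s+r} |k+l̂₁|²⋯|k+l̂_p|²)`,
set to `0` when `k = 0` or one of the denominators vanishes. -/
def hTerm {n p : ℕ} (b : (Fin p → Fin n → ℤ) → ℂ) (Pj : MvPolynomial (Fin n) ℝ) (r : ℕ)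
    (φ : (Fin n → ℤ) → (Fin p → Fin n → ℤ) → ℝ) (s : ℂ) (k : Fin n → ℤ)
    (l : Fin p → Fin n → ℤ) : ℂ :=
  if k = 0 ∨ ∃ i : Fin p, k + lhat l i = 0 then 0
  else b l * ((MvPolynomial.eval (fun i => ((k i : ℤ) : ℝ)) Pj : ℝ) : ℂ) *
      Complex.exp (Complex.I * ((φ k l : ℝ) : ℂ)) /
    ((znorm k : ℂ) ^ (s + (r : ℂ)) * ∏ i : Fin p, ((znorm (k + lhat l i) : ℝ) : ℂ) ^ 2)

/-- Cast of an integer vector into Euclidean space. -/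
def zvec {ι : Type*} [Fintype ι] (k : ι → ℤ) : EuclideanSpace ℝ ι :=
  WithLp.toLp 2 (fun i => (k i : ℝ))

lemma zvec_add {ι : Type*} [Fintype ι] (k l : ι → ℤ) : zvec (k + l) = zvec k + zvec l := by
  ext i; simp [zvec]

lemma norm_zvec {ι : Type*} [Fintype ι] (k : ι → ℤ) :
    ‖zvec k‖ = Real.sqrt (∑ i, ((k i : ℝ)) ^ 2) := by
  simp [zvec, EuclideanSpace.norm_eq]

lemma znorm_eq {n : ℕ} (k : Fin n → ℤ) : znorm k = ‖zvec k‖ := (norm_zvec k).symm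

lemma zvec_sum {ι κ : Type*} [Fintype ι] (s : Finset κ) (f : κ → ι → ℤ) :
    zvec (∑ j ∈ s, f j) = ∑ j ∈ s, zvec (f j) := by
  ext i; simp [zvec]

lemma summable_zvec {ι : Type*} [Fintype ι] (r : ℝ) (hr : r < -(Fintype.card ι : ℝ)) :
    Summable (fun k : ι → ℤ => ‖zvec k‖ ^ r) := by
  classical
  let B := (EuclideanSpace.basisFun ι ℝ).toBasis
  let L : Submodule ℤ (EuclideanSpace ℝ ι) := Submodule.span ℤ (Set.range B)
  have hrank : Module.finrank ℤ L = Fintype.card ι := by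
    rw [ZLattice.rank ℝ L]; simp
  have h := ZLattice.summable_norm_rpow L r (by rw [hrank]; exact hr)
  have hmem : ∀ k : ι → ℤ, zvec k ∈ L := by
    intro k
    have : zvec k = ∑ i, k i • B i := by
      ext a
      simp [zvec, B, Pi.single_apply]
    rw [this]
    exact Submodule.sum_mem _ fun i _ => Submodule.smul_mem _ _ (Submodule.subset_span (Set.mem_range_self i))
  have hinj : Function.Injective (fun k : ι → ℤ => (⟨zvec k, hmem k⟩ : L)) := by
    intro k l hkl
    have h1 : zvec k = zvec l := congrArg Subtype.val hkl
    funext i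
    have := congrArg (fun v : EuclideanSpace ℝ ι => v i) h1
    simpa [zvec] using this
  have h5 := h.comp_injective hinj
  simpa only [Function.comp_def, Submodule.coe_norm] using h5

lemma one_le_znorm {n : ℕ} (k : Fin n → ℤ) (hk : k ≠ 0) : 1 ≤ znorm k := by
  obtain ⟨i, hi⟩ := Function.ne_iff.mp hk
  have h1 : (1 : ℤ) ≤ (k i) ^ 2 := by
    have : 0 < (k i) ^ 2 := by have : k i ≠ 0 := hi; positivity
    omega
  have h2 : (1 : ℝ) ≤ (k i : ℝ) ^ 2 := by exact_mod_cast h1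
  have h3 : (k i : ℝ) ^ 2 ≤ ∑ a, (k a : ℝ) ^ 2 :=
    Finset.single_le_sum (f := fun a => (k a : ℝ) ^ 2) (fun _ _ => sq_nonneg _) (Finset.mem_univ i)
  unfold znorm
  exact Real.one_le_sqrt.mpr (h2.trans h3)

/-- `1 + |l|²`. -/
def bigN {p n : ℕ} (l : Fin p → Fin n → ℤ) : ℝ := 1 + ∑ i, ∑ a, ((l i a : ℝ)) ^ 2

lemma one_le_bigN {p n : ℕ} (l : Fin p → Fin n → ℤ) : 1 ≤ bigN l := by
  unfold bigN
  have : 0 ≤ ∑ i, ∑ a, ((l i a : ℝ)) ^ 2 := by positivity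
  linarith

lemma znorm_lhat_le {p n : ℕ} (l : Fin p → Fin n → ℤ) (i : Fin p) :
    znorm (lhat l i) ≤ p * Real.sqrt (bigN l) := by
  have h1 : ∀ j, ‖zvec (l j)‖ ≤ Real.sqrt (bigN l) := by
    intro j
    rw [norm_zvec]
    apply Real.sqrt_le_sqrt
    have := Finset.single_le_sum (f := fun i => ∑ a, ((l i a : ℝ)) ^ 2)
      (fun _ _ => by positivity) (Finset.mem_univ j)
    unfold bigN
    linarith
  rw [znorm_eq, lhat, zvec_sum]
  calc _ ≤ ∑ j ∈ Finset.Iic i, ‖zvec (l j)‖ := norm_sum_le _ _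
    _ ≤ ∑ j : Fin p, ‖zvec (l j)‖ :=
      Finset.sum_le_sum_of_subset_of_nonneg (Finset.subset_univ _) (fun _ _ _ => norm_nonneg _)
    _ ≤ ∑ j : Fin p, Real.sqrt (bigN l) := Finset.sum_le_sum fun j _ => h1 j
    _ = _ := by simp

lemma znorm_sq_le {p n : ℕ} (k : Fin n → ℤ) (l : Fin p → Fin n → ℤ) (i : Fin p)
    (h : k + lhat l i ≠ 0) :
    znorm k ^ 2 ≤ ((p + 1 : ℝ) ^ 2 * bigN l) * znorm (k + lhat l i) ^ 2 := by
  have h1 := one_le_znorm _ h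
  have h2 := znorm_lhat_le l i
  have hN := one_le_bigN l
  have hs : 1 ≤ Real.sqrt (bigN l) := Real.one_le_sqrt.mpr hN
  have h3 : znorm k ≤ znorm (k + lhat l i) + znorm (lhat l i) := by
    rw [znorm_eq, znorm_eq, znorm_eq, zvec_add]
    calc ‖zvec k‖ = ‖(zvec k + zvec (lhat l i)) - zvec (lhat l i)‖ := by simp
      _ ≤ _ := norm_sub_le _ _
  have h0 : 0 ≤ znorm k := Real.sqrt_nonneg _
  have hp0 : (0 : ℝ) ≤ p := Nat.cast_nonneg _
  have h4 : znorm k ≤ ((p + 1) * Real.sqrt (bigN l)) * znorm (k + lhat l i) := by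
    have e1 : p * Real.sqrt (bigN l) ≤ p * Real.sqrt (bigN l) * znorm (k + lhat l i) :=
      le_mul_of_one_le_right (by positivity) h1
    have e2 : znorm (k + lhat l i) ≤ Real.sqrt (bigN l) * znorm (k + lhat l i) :=
      le_mul_of_one_le_left (by linarith) hs
    nlinarith
  calc znorm k ^ 2 ≤ (((p + 1) * Real.sqrt (bigN l)) * znorm (k + lhat l i)) ^ 2 :=
        pow_le_pow_left₀ h0 h4 2
    _ = _ := by
      rw [mul_pow, mul_pow, Real.sq_sqrt (by linarith)]

lemma summable_bigN (p n : ℕ) :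
    Summable (fun l : Fin p → Fin n → ℤ => (bigN l ^ (p * n + 1))⁻¹) := by
  have h := summable_zvec (ι := Fin p × Fin n) (-((p * n + 1 : ℕ) : ℝ)) (by simp)
  have h2 := ((Equiv.curry (Fin p) (Fin n) ℤ).symm.summable_iff).mpr h
  have h3 : Summable (fun l : Fin p → Fin n → ℤ => if l = 0 then (1 : ℝ) else 0) :=
    summable_of_ne_finset_zero (s := {0}) (by intro l hl; simp at hl; simp [hl])
  refine Summable.of_nonneg_of_le (fun l => ?_) (fun l => ?_) (h2.add h3)
  · have := one_le_bigN l; positivity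
  · have hN := one_le_bigN l
    by_cases hl : l = 0
    · simp only [hl, if_true]
      have : bigN (0 : Fin p → Fin n → ℤ) = 1 := by simp [bigN]
      rw [this]
      simp only [one_pow, inv_one, le_add_iff_nonneg_left, Function.comp]
      positivity
    · simp only [hl, if_false, add_zero, Function.comp]
      have hq : ‖zvec ((Equiv.curry (Fin p) (Fin n) ℤ).symm l)‖ = Real.sqrt (bigN l - 1) := by
        rw [norm_zvec, Fintype.sum_prod_type]
        simp [bigN, Function.uncurry]
      have hpos : 0 < ‖zvec ((Equiv.curry (Fin p) (Fin n) ℤ).symm l)‖ := by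
        rw [hq]
        apply Real.sqrt_pos.mpr
        obtain ⟨i, hi⟩ := Function.ne_iff.mp hl
        have e1 := one_le_znorm (l i) hi
        have e2 : 1 ≤ ∑ a, (l i a : ℝ) ^ 2 := Real.one_le_sqrt.mp e1
        have := Finset.single_le_sum (f := fun i => ∑ a, ((l i a : ℝ)) ^ 2)
          (fun _ _ => by positivity) (Finset.mem_univ i)
        unfold bigN
        linarith
      rw [Real.rpow_neg hpos.le, Real.rpow_natCast]
      have hle : ‖zvec ((Equiv.curry (Fin p) (Fin n) ℤ).symm l)‖ ≤ bigN l := by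
        rw [hq]
        apply Real.sqrt_le_iff.mpr
        constructor <;> nlinarith
      gcongr

lemma schwartz_bound {p n : ℕ} (b : (Fin p → Fin n → ℤ) → ℂ) (hb : IsSchwartzSeq b) (m : ℕ) :
    ∃ C : ℝ, 0 ≤ C ∧ ∀ l, bigN l ^ m * ‖b l‖ ≤ C := by
  obtain ⟨C, hC⟩ := hb (2 * m)
  refine ⟨Real.sqrt C, Real.sqrt_nonneg _, fun l => ?_⟩
  apply Real.le_sqrt_of_sq_le
  calc _ = bigN l ^ (2 * m) * ‖b l‖ ^ 2 := by ring
    _ ≤ C := hC l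

lemma poly_bound {n j : ℕ} (P : MvPolynomial (Fin n) ℝ) (hP : P.IsHomogeneous j) :
    ∃ C : ℝ, 0 ≤ C ∧ ∀ k : Fin n → ℤ,
      |MvPolynomial.eval (fun i => ((k i : ℤ) : ℝ)) P| ≤ C * znorm k ^ j := by
  refine ⟨∑ d ∈ P.support, |P.coeff d|, by positivity, fun k => ?_⟩
  rw [MvPolynomial.eval_eq', Finset.sum_mul]
  refine (Finset.abs_sum_le_sum_abs _ _).trans (Finset.sum_le_sum fun d hd => ?_)
  rw [abs_mul]
  gcongr
  have hdeg : ∑ i, d i = j := by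
    have := hP (MvPolynomial.mem_support_iff.mp hd)
    rw [← this]
    simp [Finsupp.weight_apply, Finsupp.sum_fintype]
  rw [Finset.abs_prod, ← hdeg, ← Finset.prod_pow_eq_pow_sum]
  refine Finset.prod_le_prod (fun _ _ => abs_nonneg _) fun i _ => ?_
  rw [abs_pow]
  gcongr
  unfold znorm
  apply Real.abs_le_sqrt
  exact Finset.single_le_sum (f := fun a => (k a : ℝ) ^ 2) (fun _ _ => sq_nonneg _)
    (Finset.mem_univ i)

lemma final_calc {β E A B D M N z W Q R : ℝ} (hβ : 0 ≤ β) (hB0 : 0 ≤ B) (hz : 0 ≤ z)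
    {j : ℕ} (hW : 0 < W) (hQ : 0 < Q) (hR : 0 < R) (hD : 0 < D)
    (hE : E ≤ B * z ^ j) (hinv : 1 / Q ≤ D * N / R) (hbl : β * N ≤ A * M) :
    β * E / (W * Q) ≤ A * B * D * (z ^ j / (W * R) * M) := by
  calc β * E / (W * Q) ≤ β * (B * z ^ j) / (W * Q) := by gcongr
    _ = β * (B * z ^ j) / W * (1 / Q) := by field_simp
    _ ≤ β * (B * z ^ j) / W * (D * N / R) := by gcongr
    _ = (β * N) * (B * z ^ j / W * D / R) := by ring
    _ ≤ (A * M) * (B * z ^ j / W * D / R) := by gcongr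
    _ = A * B * D * (z ^ j / (W * R) * M) := by field_simp

set_option maxHeartbeats 1000000 in
lemma hTerm_bound {n p : ℕ} (j r : ℕ)
    (b : (Fin p → Fin n → ℤ) → ℂ) (hb : IsSchwartzSeq b)
    (Pj : MvPolynomial (Fin n) ℝ) (hPj : Pj.IsHomogeneous j)
    (φ : (Fin n → ℤ) → (Fin p → Fin n → ℤ) → ℝ) (s : ℂ) :
    ∃ C : ℝ, ∀ k l, ‖hTerm b Pj r φ s k l‖ ≤
      C * (‖zvec k‖ ^ ((j : ℝ) - s.re - r - 2 * p) * (bigN l ^ (p * n + 1))⁻¹) := by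
  obtain ⟨A, hA0, hA⟩ := schwartz_bound b hb (p + (p * n + 1))
  obtain ⟨B, hB0, hB⟩ := poly_bound Pj hPj
  refine ⟨A * B * ((p + 1 : ℝ) ^ 2) ^ p, fun k l => ?_⟩
  have hN := one_le_bigN l
  have hNpos : 0 < bigN l := by linarith
  unfold hTerm
  split_ifs with h
  · rw [norm_zero]; positivity
  push Not at h
  obtain ⟨hk, hl⟩ := h
  have hz := one_le_znorm k hk
  have hz0 : 0 < znorm k := by linarith
  have hexp : ‖Complex.exp (Complex.I * ((φ k l : ℝ) : ℂ))‖ = 1 := by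
    rw [mul_comm]; exact Complex.norm_exp_ofReal_mul_I _
  rw [norm_div, norm_mul, norm_mul, norm_mul, hexp, mul_one, norm_prod,
    Complex.norm_cpow_eq_rpow_re_of_pos hz0, Complex.norm_real, Real.norm_eq_abs, ← znorm_eq]
  have hprod : ∏ i : Fin p, ‖((znorm (k + lhat l i) : ℝ) : ℂ) ^ 2‖
      = ∏ i : Fin p, znorm (k + lhat l i) ^ 2 := by
    refine Finset.prod_congr rfl fun i _ => ?_
    rw [norm_pow, Complex.norm_real, Real.norm_eq_abs, sq_abs]
  rw [hprod]
  set Q := ∏ i : Fin p, znorm (k + lhat l i) ^ 2 with hQ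
  have hQpos : 0 < Q := Finset.prod_pos fun i _ => by
    have := one_le_znorm _ (hl i); positivity
  have hQle : (znorm k ^ 2) ^ p ≤ (((p + 1 : ℝ) ^ 2) ^ p * bigN l ^ p) * Q := by
    have : ∏ i : Fin p, znorm k ^ 2 ≤
        ∏ i : Fin p, ((p + 1 : ℝ) ^ 2 * bigN l) * znorm (k + lhat l i) ^ 2 :=
      Finset.prod_le_prod (fun _ _ => by positivity) fun i _ => znorm_sq_le k l i (hl i)
    rw [Finset.prod_mul_distrib] at this
    simpa [mul_pow] using this
  have hbl : ‖b l‖ * bigN l ^ p ≤ A * (bigN l ^ (p * n + 1))⁻¹ := by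
    rw [← div_eq_mul_inv, le_div_iff₀ (by positivity)]
    calc _ = bigN l ^ (p + (p * n + 1)) * ‖b l‖ := by rw [pow_add]; ring
      _ ≤ A := hA l
  have hre : (s + (r : ℂ)).re = s.re + r := by simp
  rw [hre]
  have hsplit : znorm k ^ ((j : ℝ) - s.re - r - 2 * p)
      = znorm k ^ j / (znorm k ^ (s.re + r) * (znorm k ^ 2) ^ p) := by
    have : (j : ℝ) - s.re - r - 2 * p = j - ((s.re + r) + ((2 * p : ℕ) : ℝ)) := by
      push_cast; ring
    rw [this, Real.rpow_sub hz0, Real.rpow_add hz0, Real.rpow_natCast, Real.rpow_natCast, pow_mul]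
  rw [hsplit]
  set W := znorm k ^ (s.re + r) with hW
  have hWpos : 0 < W := Real.rpow_pos_of_pos hz0 _
  set R := (znorm k ^ 2) ^ p with hR
  have hRpos : 0 < R := by positivity
  set D := ((p + 1 : ℝ) ^ 2) ^ p with hD
  have hDpos : 0 < D := by positivity
  set M := (bigN l ^ (p * n + 1))⁻¹ with hM
  have hinv : 1 / Q ≤ D * bigN l ^ p / R := by
    rw [div_le_div_iff₀ hQpos hRpos]; linarith
  exact final_calc (norm_nonneg _) hB0 hz0.le hWpos hQpos hRpos hDpos (hB k) hinv hbl

/-- **Lemma.** For `b ∈ 𝒮((ℤⁿ)^p)`, `P_j` homogeneous of degree `j`, `r ∈ ℕ₀` and a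
real phase `φ`, the family `h(s,k,l)` is absolutely summable over
`(k,l) ∈ ℤⁿ × (ℤⁿ)^p` whenever `Re s > n + j − r − 2p`; in particular the two
iterated sums coincide. -/
theorem hTerm_abs_summable (n p : ℕ) (hn : 0 < n) (hp : 0 < p) (j r : ℕ)
    (b : (Fin p → Fin n → ℤ) → ℂ) (hb : IsSchwartzSeq b)
    (Pj : MvPolynomial (Fin n) ℝ) (hPj : Pj.IsHomogeneous j)
    (φ : (Fin n → ℤ) → (Fin p → Fin n → ℤ) → ℝ)
    (s : ℂ) (hs : (n : ℝ) + (j : ℝ) - (r : ℝ) - 2 * (p : ℝ) < s.re) :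
    Summable (fun kl : (Fin n → ℤ) × (Fin p → Fin n → ℤ) =>
      ‖hTerm b Pj r φ s kl.1 kl.2‖) ∧
    (∑' k : Fin n → ℤ, ∑' l : Fin p → Fin n → ℤ, hTerm b Pj r φ s k l) =
      ∑' l : Fin p → Fin n → ℤ, ∑' k : Fin n → ℤ, hTerm b Pj r φ s k l := by
  have hS : Summable (fun kl : (Fin n → ℤ) × (Fin p → Fin n → ℤ) =>
      ‖hTerm b Pj r φ s kl.1 kl.2‖) := by
    obtain ⟨C, hC⟩ := hTerm_bound j r b hb Pj hPj φ s
    have h1 := summable_zvec (ι := Fin n) ((j : ℝ) - s.re - r - 2 * p) (by simp; linarith)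
    have h2 := summable_bigN p n
    have h3 := (h1.mul_of_nonneg h2 (fun k => by positivity)
      (fun l => by have := one_le_bigN l; positivity)).mul_left C
    exact Summable.of_nonneg_of_le (fun _ => norm_nonneg _) (fun kl => hC kl.1 kl.2) h3
  refine ⟨hS, ?_⟩
  have h4 : Summable (Function.uncurry fun (k : Fin n → ℤ) (l : Fin p → Fin n → ℤ) =>
      hTerm b Pj r φ s k l) := hS.of_norm
  exact h4.tsum_comm.symm

end
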